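/- (Uniqueness of Fuchsian systems with prescribed monodromy, normalized case) Let A(x) = Σᵢ Aᵢ/(x - tᵢ) and B(x) = Σᵢ Bᵢ/(x - tᵢ) be two 2×2 Fuchsian systems with the same distinct singularities, such that for each i the matrices Aᵢ and Bᵢ have the same eigenvalues (θᵢ⁺, θᵢ⁻) with θᵢ⁺ - θᵢ⁻ ∉ ℤ, both residues at infinity A_∞ = -Σ Aᵢ and B_∞ = -Σ Bᵢ are diagonal with the same (distinct) eigenvalues, and the two systems have the same monodromy representation. Then there exists ξ ∈ ℂ* such that B(x) = C·A(x)·C⁻¹ where C = diag(1, ξ) or C = ![![0,1],![ξ,0]]. -/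

import Mathlib

open Matrix Polynomial

attribute [local instance] Matrix.normedAddCommGroup Matrix.normedSpace


lemma sylv (A B V : Matrix (Fin 2) (Fin 2) ℂ) (p m : ℂ)
    (hA : A.charpoly = (X - C p) * (X - C m)) (hB : B.charpoly = (X - C p) * (X - C m))
    (hr : ∀ k : ℤ, p - m ≠ (k : ℂ)) (k : ℤ) (hk : k ≠ 0)
    (h : B * V - V * A = (k : ℂ) • V) : V = 0 := by
  have hCH : (B - p • 1) * (B - m • 1) = 0 := by
    have := Matrix.aeval_self_charpoly B
    rw [hB] at this
    simpa [Algebra.algebraMap_eq_smul_one] using this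
  have hBV : B * V = V * A + (k : ℂ) • V := by rw [← h]; abel
  have key : ∀ q : ℂ, (B - q • 1) * V = V * (A + (k : ℂ) • 1 - q • 1) := by
    intro q
    rw [sub_mul, hBV, mul_sub, mul_add]; simp
  have hU : ∀ q : ℂ, (q - k - p) * (q - k - m) ≠ 0 → IsUnit (A + (k : ℂ) • 1 - q • 1) := by
    intro q hq
    have h1 := Matrix.eval_charpoly A (q - k)
    rw [hA] at h1
    have h2 : IsUnit (Matrix.scalar (Fin 2) (q - k) - A) := by
      rw [Matrix.isUnit_iff_isUnit_det, ← h1]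
      simpa using hq
    have h3 : A + (k : ℂ) • 1 - q • 1 = -(Matrix.scalar (Fin 2) (q - k) - A) := by
      rw [Matrix.scalar_apply, ← Matrix.smul_one_eq_diagonal]; module
    rw [h3]; exact h2.neg
  have hk' : (k : ℂ) ≠ 0 := by exact_mod_cast hk
  have e : V * ((A + (k : ℂ) • 1 - p • 1) * (A + (k : ℂ) • 1 - m • 1)) = 0 := by
    have : ((B - p • 1) * (B - m • 1)) * V = 0 := by rw [hCH, zero_mul]
    rwa [mul_assoc, key m, ← mul_assoc, key p, mul_assoc] at this
  have u := (hU p (by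
      refine mul_ne_zero ?_ ?_
      · simpa using hk'
      · intro h0; exact hr k (by linear_combination h0))).mul (hU m (by
      refine mul_ne_zero ?_ ?_
      · intro h0; exact hr (-k) (by push_cast; linear_combination -h0)
      · simpa using hk'))
  exact (IsUnit.mul_left_eq_zero u).1 e

section
open Filter Topology
variable {E : Type*} [NormedAddCommGroup E] [NormedSpace ℂ E] 

lemma growth (t : ℂ) (F F' : ℂ → E) (ρ K : ℝ) (hρ : 0 < ρ)
    (hF : ∀ z, z ≠ t → ‖z - t‖ ≤ ρ → HasDerivAt F (F' z) z)
    (hK : ∀ z, z ≠ t → ‖z - t‖ ≤ ρ → ‖(z - t) • F' z‖ ≤ K * ‖F z‖) :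
    ∃ M : ℝ, ∀ z, z ≠ t → ‖z - t‖ ≤ ρ → ‖F z‖ ≤ M * (ρ / ‖z - t‖) ^ K := by
  have hc : IsCompact (Metric.sphere t ρ) := isCompact_sphere t ρ
  obtain ⟨M, hM⟩ := hc.exists_bound_of_continuousOn (f := F) (by
    intro z hz
    have hz' : ‖z - t‖ = ρ := by simpa [dist_eq_norm] using hz
    refine (hF z ?_ hz'.le).continuousAt.continuousWithinAt
    rintro rfl; simp at hz'; linarith)
  refine ⟨M, fun z hz hzρ => ?_⟩
  have hpos : 0 < ‖z - t‖ := norm_pos_iff.2 (sub_ne_zero.2 hz)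
  set w : ℂ := ((ρ / ‖z - t‖ : ℝ) : ℂ) * (z - t) with hw
  have hwn : ‖w‖ = ρ := by
    rw [hw, norm_mul, Complex.norm_real, Real.norm_of_nonneg (by positivity)]; field_simp
  set S := Real.log (ρ / ‖z - t‖) with hS
  have hq1 : 1 ≤ ρ / ‖z - t‖ := by rw [le_div_iff₀ hpos]; linarith
  have hS0 : 0 ≤ S := Real.log_nonneg hq1
  let γ : ℝ → ℂ := fun s => t + Complex.exp (-(s : ℂ)) * w
  have hγn : ∀ s, ‖γ s - t‖ = Real.exp (-s) * ρ := by
    intro s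
    simp only [γ, add_sub_cancel_left, norm_mul, hwn, Complex.norm_exp]; simp
  have hγt : ∀ s, γ s ≠ t := by
    intro s h
    have := hγn s
    rw [h] at this; simp at this
    exact hρ.ne' this
  have hγρ : ∀ s, 0 ≤ s → ‖γ s - t‖ ≤ ρ := by
    intro s hs
    rw [hγn]
    have : Real.exp (-s) ≤ 1 := by simpa using hs
    nlinarith
  have hγd : ∀ s, HasDerivAt γ (-(γ s - t)) s := by
    intro s
    have h1 : HasDerivAt (fun s : ℝ => -(s : ℂ)) (-1) s := Complex.ofRealCLM.hasDerivAt.neg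
    have := (h1.cexp.mul_const w).const_add t
    refine this.congr_deriv ?_
    change _ = -(t + Complex.exp (-(s : ℂ)) * w - t)
    ring
  have hfd : ∀ s, 0 ≤ s → HasDerivAt (fun s => F (γ s)) (-(γ s - t) • F' (γ s)) s := by
    intro s hs
    exact (hF _ (hγt s) (hγρ s hs)).scomp s (hγd s)
  have hG := norm_le_gronwallBound_of_norm_deriv_right_le (f := fun s => F (γ s))
    (f' := fun s => -(γ s - t) • F' (γ s)) (δ := M) (K := K) (ε := 0) (a := 0) (b := S)
    (fun s hs => (hfd s hs.1).continuousAt.continuousWithinAt)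
    (fun s hs => (hfd s hs.1).hasDerivWithinAt)
    (hM _ (by simp [mem_sphere_iff_norm, hγn]))
    (fun s hs => by
      rw [neg_smul, norm_neg, add_zero]; exact hK _ (hγt s) (hγρ s hs.1))
    S ⟨hS0, le_rfl⟩
  have hγS : γ S = z := by
    simp only [γ]
    rw [← Complex.ofReal_neg, ← Complex.ofReal_exp, Real.exp_neg, hS, Real.exp_log (by positivity),
      hw, ← mul_assoc, ← Complex.ofReal_mul, inv_mul_cancel₀ (by positivity)]
    simp
  rw [gronwallBound_ε0, sub_zero] at hG
  simp only [hγS] at hG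
  rwa [Real.rpow_def_of_pos (by positivity), ← hS, mul_comm S]

variable [CompleteSpace E]

lemma mero (t : ℂ) (F F' : ℂ → E) (ρ K : ℝ) (hρ : 0 < ρ)
    (hF : ∀ z, z ≠ t → ‖z - t‖ ≤ ρ → HasDerivAt F (F' z) z)
    (hK : ∀ z, z ≠ t → ‖z - t‖ ≤ ρ → ‖(z - t) • F' z‖ ≤ K * ‖F z‖) :
    MeromorphicAt F t := by
  obtain ⟨M, hM⟩ := growth t F F' ρ K hρ hF hK
  obtain ⟨N, hN⟩ := exists_nat_ge K
  have hball : ∀ᶠ z in 𝓝[≠] t, z ≠ t ∧ ‖z - t‖ ≤ ρ := by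
    refine (eventually_mem_nhdsWithin).and (nhdsWithin_le_nhds ?_)
    filter_upwards [Metric.ball_mem_nhds t hρ] with z hz
    rw [← dist_eq_norm]; exact (Metric.mem_ball.1 hz).le
  refine ⟨N + 1, Complex.analyticAt_of_differentiable_on_punctured_nhds_of_continuousAt ?_ ?_⟩
  · filter_upwards [hball] with z hz
    exact DifferentiableAt.smul (by fun_prop) (hF z hz.1 hz.2).differentiableAt
  · rw [continuousAt_iff_punctured_nhds]
    simp only [sub_self, ne_eq, Nat.add_eq_zero_iff, one_ne_zero, and_false, not_false_eq_true,
      zero_pow, zero_smul]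
    have hlim : Tendsto (fun z : ℂ => (|M| * ρ ^ N) * ‖z - t‖) (𝓝[≠] t) (𝓝 0) := by
      have : Continuous (fun z : ℂ => (|M| * ρ ^ N) * ‖z - t‖) := by fun_prop
      have := this.tendsto t
      simp only [sub_self, norm_zero, mul_zero] at this
      exact this.mono_left nhdsWithin_le_nhds
    refine squeeze_zero_norm' ?_ hlim
    filter_upwards [hball] with z hz
    have hpos : 0 < ‖z - t‖ := norm_pos_iff.2 (sub_ne_zero.2 hz.1)
    have hq1 : 1 ≤ ρ / ‖z - t‖ := by rw [le_div_iff₀ hpos]; linarith [hz.2]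
    have h1 : ‖F z‖ ≤ |M| * (ρ / ‖z - t‖) ^ N := by
      refine (hM z hz.1 hz.2).trans ?_
      gcongr
      · exact le_abs_self M
      · rw [← Real.rpow_natCast]
        exact Real.rpow_le_rpow_of_exponent_le hq1 hN
    rw [norm_smul, norm_pow]
    calc ‖z - t‖ ^ (N + 1) * ‖F z‖ ≤ ‖z - t‖ ^ (N + 1) * (|M| * (ρ / ‖z - t‖) ^ N) := by gcongr
      _ = _ := by rw [div_pow, pow_succ]; field_simp

lemma removable (t : ℂ) (F : ℂ → E) (L : ℂ → E →L[ℂ] E) (hL : ContinuousAt L t)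
    (hF : ∀ᶠ z in 𝓝[≠] t, DifferentiableAt ℂ F z)
    (hode : ∀ᶠ z in 𝓝[≠] t, (z - t) • deriv F z = L z (F z))
    (hres : ∀ k : ℤ, k ≠ 0 → ∀ v, L t v = (k : ℂ) • v → v = 0) :
    ∃ c, Tendsto F (𝓝[≠] t) (𝓝 c) := by
  have hm : MeromorphicAt F t := by
    have h1 : ∀ᶠ z in 𝓝 t, ‖L z‖ ≤ ‖L t‖ + 1 :=
      (hL.norm.eventually (ge_mem_nhds (lt_add_one _)))
    have h2 := (h1.and (eventually_nhdsWithin_iff.1 (hF.and hode)))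
    obtain ⟨ρ, hρ, h⟩ := Metric.eventually_nhds_iff_ball.1 h2
    have hb : ∀ z, ‖z - t‖ ≤ ρ / 2 → z ∈ Metric.ball t ρ := by
      intro z hz
      rw [Metric.mem_ball, dist_eq_norm]; linarith
    refine mero t F (deriv F) (ρ / 2) (‖L t‖ + 1) (by positivity) ?_ ?_
    · intro z hz hz2
      exact ((h z (hb z hz2)).2 hz).1.hasDerivAt
    · intro z hz hz2
      rw [((h z (hb z hz2)).2 hz).2]
      refine ((L z).le_opNorm _).trans ?_
      gcongr
      exact (h z (hb z hz2)).1
  by_cases htop : meromorphicOrderAt F t = ⊤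
  · refine ⟨0, ?_⟩
    rw [meromorphicOrderAt_eq_top_iff] at htop
    exact tendsto_const_nhds.congr' (htop.mono fun z hz => hz.symm)
  obtain ⟨g, hg, hg0, hFg⟩ := (meromorphicOrderAt_ne_top_iff hm).1 htop
  set k : ℤ := (meromorphicOrderAt F t).untop₀ with hk
  have hd : ∀ᶠ z in 𝓝[≠] t, (k : ℂ) • g z + (z - t) • deriv g z = L z (g z) := by
    have hFg' : ∀ᶠ z in 𝓝[≠] t, F =ᶠ[𝓝 z] fun z => (z - t) ^ k • g z := by
      have := eventually_eventually_nhdsWithin.2 hFg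
      filter_upwards [this, self_mem_nhdsWithin] with z hz hzt
      rwa [IsOpen.nhdsWithin_eq isOpen_compl_singleton hzt] at hz
    have hga : ∀ᶠ z in 𝓝[≠] t, AnalyticAt ℂ g z := nhdsWithin_le_nhds hg.eventually_analyticAt
    filter_upwards [hFg', hga, hode, self_mem_nhdsWithin] with z h1 h2 h3 hzt
    have hz0 : z - t ≠ 0 := sub_ne_zero.2 hzt
    have hp : HasDerivAt (fun z : ℂ => (z - t) ^ k) ((k : ℂ) * (z - t) ^ (k - 1)) z := by
      have := (hasDerivAt_zpow k (z - t) (Or.inl hz0)).comp_sub_const z t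
      exact this
    have hdd := (hp.smul h2.differentiableAt.hasDerivAt).congr_of_eventuallyEq h1
    rw [hdd.deriv, h1.eq_of_nhds, map_smul] at h3
    have hz1 : (z - t) ^ k ≠ 0 := zpow_ne_zero _ hz0
    apply smul_right_injective E hz1
    simp only
    rw [← h3, smul_add, smul_add, smul_smul, smul_smul, smul_smul, smul_smul, zpow_sub_one₀ hz0]
    rw [add_comm]
    congr 2
    · ring
    · field_simp
  have hlim1 : Tendsto (fun z => (k : ℂ) • g z + (z - t) • deriv g z) (𝓝[≠] t)
      (𝓝 ((k : ℂ) • g t)) := by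
    have : ContinuousAt (fun z => (k : ℂ) • g z + (z - t) • deriv g z) t := by
      have h1 := hg.continuousAt
      have h2 := hg.deriv.continuousAt
      fun_prop
    have := this.tendsto
    simp only [sub_self, zero_smul, add_zero] at this
    exact this.mono_left nhdsWithin_le_nhds
  have hlim2 : Tendsto (fun z => L z (g z)) (𝓝[≠] t) (𝓝 (L t (g t))) :=
    (hL.clm_apply hg.continuousAt).tendsto.mono_left nhdsWithin_le_nhds
  have heq := tendsto_nhds_unique (hlim1.congr' hd) hlim2
  have hk0 : k = 0 := by
    by_contra hne
    exact hg0 (hres k hne _ heq.symm)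
  refine ⟨g t, (hg.continuousAt.tendsto.mono_left nhdsWithin_le_nhds).congr' ?_⟩
  filter_upwards [hFg] with z hz
  rw [hz, hk0]; simp

lemma fuchs_global {m : ℕ} (t : Fin m → ℂ) (ht : Function.Injective t) (T : Fin m → E →L[ℂ] E)
    (F : ℂ → E) (hF : ∀ x, (∀ i, x ≠ t i) → DifferentiableAt ℂ F x)
    (hode : ∀ x, (∀ i, x ≠ t i) → deriv F x = ∑ i, (x - t i)⁻¹ • T i (F x))
    (hres : ∀ i, ∀ k : ℤ, k ≠ 0 → ∀ v, T i v = (k : ℂ) • v → v = 0)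
    (hinf : ∀ k : ℤ, k ≠ 0 → ∀ v, ∑ i, T i v = (k : ℂ) • v → v = 0) :
    ∃ c, (∀ x, (∀ i, x ≠ t i) → F x = c) ∧ ∀ i, T i c = 0 := by
  have hpunc : ∀ x, ∀ᶠ z in 𝓝[≠] x, ∀ i, z ≠ t i := by
    intro x
    rw [eventually_all]
    intro i
    by_cases h : x = t i
    · rw [← h]; exact self_mem_nhdsWithin
    · exact nhdsWithin_le_nhds (isOpen_ne.mem_nhds h)
  have hcl : ∀ i j, j ≠ i → t i - t j ≠ 0 := fun i j h => sub_ne_zero.2 fun e => h (ht e.symm)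
  -- limits at the finite singularities
  have hlim : ∀ x, ∃ c, Tendsto F (𝓝[≠] x) (𝓝 c) := by
    intro x
    by_cases hx : ∀ i, x ≠ t i
    · exact ⟨F x, (hF x hx).continuousAt.tendsto.mono_left nhdsWithin_le_nhds⟩
    push Not at hx
    obtain ⟨i, rfl⟩ := hx
    refine removable (t i) F
      (fun z => T i + ∑ j ∈ Finset.univ.erase i, ((z - t i) * (z - t j)⁻¹) • T j) ?_ ?_ ?_ ?_
    · refine continuousAt_const.add (tendsto_finsetSum _ fun j hj => ?_)
      have := hcl i j (Finset.ne_of_mem_erase hj)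
      have h2 : ContinuousAt (fun z => ((z - t i) * (z - t j)⁻¹) • T j) (t i) := by
        fun_prop (disch := assumption)
      exact h2
    · filter_upwards [hpunc (t i)] with z hz using hF z hz
    · filter_upwards [hpunc (t i)] with z hz
      have hz0 : z - t i ≠ 0 := sub_ne_zero.2 (hz i)
      rw [hode z hz, ← Finset.add_sum_erase _ _ (Finset.mem_univ i), smul_add, smul_smul,
        mul_inv_cancel₀ hz0, one_smul, Finset.smul_sum]
      simp [smul_smul]
    · intro k hk v hv
      refine hres i k hk v ?_
      simpa using hv
  -- limit at infinity
  have hlimi : ∃ c, Tendsto F (Bornology.cobounded ℂ) (𝓝 c) := by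
    have hp0 : ∀ᶠ w : ℂ in 𝓝[≠] 0, w ≠ 0 ∧ ∀ i, w⁻¹ ≠ t i := by
      refine eventually_mem_nhdsWithin.and ?_
      have h1 : ∀ᶠ z in Bornology.cobounded ℂ, ∀ i, z ≠ t i := by
        rw [eventually_all]
        intro i
        exact Bornology.isBounded_def.1 (Bornology.isBounded_singleton (x := t i))
      exact tendsto_inv₀_nhdsNE_zero.eventually h1
    obtain ⟨c, hc⟩ := removable 0 (fun w => F w⁻¹)
      (fun w => -∑ j, ((1 - w * t j)⁻¹) • T j) (by
        refine ContinuousAt.neg (tendsto_finsetSum _ fun j hj => ?_)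
        have : 1 - (0:ℂ) * t j ≠ 0 := by simp
        have h2 : ContinuousAt (fun w : ℂ => ((1 - w * t j)⁻¹) • T j) 0 := by
          fun_prop (disch := assumption)
        exact h2)
      (by
        filter_upwards [hp0] with w hw
        exact (hF _ hw.2).comp w (differentiableAt_inv hw.1))
      (by
        filter_upwards [hp0] with w hw
        have hd : HasDerivAt (fun w => F w⁻¹) (-(w ^ 2)⁻¹ • deriv F w⁻¹) w :=
          (hF _ hw.2).hasDerivAt.scomp w (hasDerivAt_inv hw.1)
        rw [hd.deriv, hode _ hw.2, smul_smul, Finset.smul_sum]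
        simp only [_root_.neg_apply, _root_.sum_apply,
          _root_.smul_apply, ← Finset.sum_neg_distrib, smul_smul, ← neg_smul]
        refine Finset.sum_congr rfl fun j _ => ?_
        congr 1
        have h0 := hw.1
        have h1 : w⁻¹ - t j ≠ 0 := sub_ne_zero.2 (hw.2 j)
        have h2 : w⁻¹ - t j = w⁻¹ * (1 - w * t j) := by field_simp
        rw [h2] at h1 ⊢
        have h3 := right_ne_zero_of_mul h1
        field_simp
        simp)
      (by
        intro k hk v hv
        refine hinf (-k) (by simpa using hk) v ?_
        simp at hv
        simp [← hv])
    refine ⟨c, ?_⟩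
    have := hc.comp (tendsto_inv₀_cobounded')
    simpa [Function.comp_def] using this
  choose G hG using hlim
  have hGF : ∀ x, (∀ i, x ≠ t i) → G x = F x := fun x hx =>
    tendsto_nhds_unique (hG x) ((hF x hx).continuousAt.tendsto.mono_left nhdsWithin_le_nhds)
  have hUo : IsOpen {x : ℂ | ∀ i, x ≠ t i} := by
    simp only [Set.ofPred_forall]
    exact isOpen_iInter_of_finite fun i => isOpen_ne
  have hGd : Differentiable ℂ G := by
    intro x
    refine (Complex.analyticAt_of_differentiable_on_punctured_nhds_of_continuousAt
      ?_ ?_).differentiableAt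
    · filter_upwards [hpunc x] with z hz
      refine (hF z hz).congr_of_eventuallyEq ?_
      filter_upwards [hUo.mem_nhds hz] with y hy using hGF y hy
    · rw [continuousAt_iff_punctured_nhds]
      refine (hG x).congr' ?_
      filter_upwards [hpunc x] with z hz using (hGF z hz).symm
  obtain ⟨c, hc⟩ := hlimi
  have hGc : ∀ x, G x = c := by
    intro x
    refine hGd.apply_eq_of_tendsto_cocompact x ?_
    rw [← Metric.cobounded_eq_cocompact]
    refine hc.congr' ?_
    have h1 : ∀ᶠ z in Bornology.cobounded ℂ, ∀ i, z ≠ t i := by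
      rw [eventually_all]
      intro i
      exact Bornology.isBounded_def.1 (Bornology.isBounded_singleton (x := t i))
    filter_upwards [h1] with z hz using (hGF z hz).symm
  have hFc : ∀ x, (∀ i, x ≠ t i) → F x = c := fun x hx => (hGF x hx).symm.trans (hGc x)
  refine ⟨c, hFc, fun i => ?_⟩
  have hz : ∀ᶠ z in 𝓝[≠] (t i),
      0 = T i c + ∑ j ∈ Finset.univ.erase i, ((z - t i) * (z - t j)⁻¹) • T j c := by
    filter_upwards [hpunc (t i)] with z hz
    have hz0 : z - t i ≠ 0 := sub_ne_zero.2 (hz i)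
    have hdz : deriv F z = 0 := by
      have : F =ᶠ[𝓝 z] fun _ => c := by
        filter_upwards [hUo.mem_nhds hz] with y hy using hFc y hy
      rw [this.deriv_eq]; simp
    have h1 := hode z hz
    rw [hdz, hFc z hz] at h1
    have h2 := congrArg (fun v => (z - t i) • v) h1
    simp only [smul_zero] at h2
    rw [← Finset.add_sum_erase _ _ (Finset.mem_univ i), smul_add, smul_smul,
        mul_inv_cancel₀ hz0, one_smul, Finset.smul_sum] at h2
    simpa [smul_smul] using h2
  have hc2 : Tendsto (fun z => T i c + ∑ j ∈ Finset.univ.erase i, ((z - t i) * (z - t j)⁻¹) • T j c)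
      (𝓝[≠] (t i)) (𝓝 (T i c + ∑ j ∈ Finset.univ.erase i,
        ((t i - t i) * (t i - t j)⁻¹) • T j c)) := by
    refine Tendsto.mono_left ?_ nhdsWithin_le_nhds
    refine tendsto_const_nhds.add (tendsto_finsetSum _ fun j hj => ?_)
    have := hcl i j (Finset.ne_of_mem_erase hj)
    have h2 : ContinuousAt (fun z => ((z - t i) * (z - t j)⁻¹) • T j c) (t i) := by
      fun_prop (disch := assumption)
    exact h2
  have := tendsto_nhds_unique (tendsto_const_nhds.congr' hz) hc2
  simpa using this.symm
end

lemma matMul_hasDerivAt {P Q : ℂ → Matrix (Fin 2) (Fin 2) ℂ} {dP dQ : Matrix (Fin 2) (Fin 2) ℂ}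
    {x : ℂ} (hP : HasDerivAt P dP x) (hQ : HasDerivAt Q dQ x) :
    HasDerivAt (fun z => P z * Q z) (dP * Q x + P x * dQ) x := by
  have hP2 : ∀ i j, HasDerivAt (fun z => P z i j) (dP i j) x := fun i j =>
    hasDerivAt_pi.1 (hasDerivAt_pi.1 hP i) j
  have hQ2 : ∀ i j, HasDerivAt (fun z => Q z i j) (dQ i j) x := fun i j =>
    hasDerivAt_pi.1 (hasDerivAt_pi.1 hQ i) j
  refine hasDerivAt_pi.2 fun i => hasDerivAt_pi.2 fun j => ?_
  have := ((hP2 i 0).mul (hQ2 0 j)).add ((hP2 i 1).mul (hQ2 1 j))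
  convert this using 1
  · ext z; simp [Matrix.mul_apply, Fin.sum_univ_two]
  · simp [Matrix.mul_apply, Fin.sum_univ_two]; ring

/-- The Sylvester operator `V ↦ B V - V A`. -/
noncomputable def sylvOp (A B : Matrix (Fin 2) (Fin 2) ℂ) :
    Matrix (Fin 2) (Fin 2) ℂ →L[ℂ] Matrix (Fin 2) (Fin 2) ℂ :=
  LinearMap.toContinuousLinearMap
    (LinearMap.mulLeft ℂ B - LinearMap.mulRight ℂ A)

lemma sylvOp_apply (A B V : Matrix (Fin 2) (Fin 2) ℂ) : sylvOp A B V = B * V - V * A := by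
  simp [sylvOp]

lemma charpoly_of_neg_diag (S : Matrix (Fin 2) (Fin 2) ℂ) (a b : ℂ)
    (h : -S = Matrix.diagonal ![a, b]) : S.charpoly = (X - C (-a)) * (X - C (-b)) := by
  have : S = Matrix.diagonal ![-a, -b] := by
    rw [← neg_neg S, h, Matrix.diagonal_neg]; congr 1; ext i; fin_cases i <;> simp
  rw [this, Matrix.charpoly_diagonal]; simp [Fin.sum_univ_two, Fin.prod_univ_two]

/-- Uniqueness of non-resonant Fuchsian systems with prescribed singularities,
exponents and monodromy, normalized at infinity: the two systems are conjugate
by a diagonal or antidiagonal constant matrix. -/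
theorem fuchsian_system_uniqueness (n : ℕ) (t : Fin (n + 2) → ℂ)
    (ht : Function.Injective t)
    (A B : Fin (n + 2) → Matrix (Fin 2) (Fin 2) ℂ)
    (θp θm : Fin (n + 2) → ℂ)
    -- `A i` and `B i` have the same eigenvalues `θp i`, `θm i`
    (hAev : ∀ i, (A i).charpoly = (X - C (θp i)) * (X - C (θm i)))
    (hBev : ∀ i, (B i).charpoly = (X - C (θp i)) * (X - C (θm i)))
    -- non-resonance at the finite singularities
    (hres : ∀ i, ∀ m : ℤ, θp i - θm i ≠ (m : ℂ))
    -- residues at infinity: both diagonal, with the same distinct eigenvalues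
    (θpinf θminf : ℂ) (hinfne : θpinf ≠ θminf)
    (hresinf : ∀ m : ℤ, θpinf - θminf ≠ (m : ℂ))
    (hAinf : -(∑ i, A i) = Matrix.diagonal ![θpinf, θminf])
    (hBinf : -(∑ i, B i) = Matrix.diagonal ![θpinf, θminf] ∨
             -(∑ i, B i) = Matrix.diagonal ![θminf, θpinf])
    -- fundamental matrix solutions on a common domain
    (Ω : Set ℂ) (hΩo : IsOpen Ω) (hΩne : Ω.Nonempty)
    (hΩconn : IsConnected Ω) (hΩS : ∀ x ∈ Ω, ∀ i, x ≠ t i)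
    (Y Z : ℂ → Matrix (Fin 2) (Fin 2) ℂ)
    (hYd : DifferentiableOn ℂ Y Ω) (hZd : DifferentiableOn ℂ Z Ω)
    (hYu : ∀ x ∈ Ω, IsUnit (Y x)) (hZu : ∀ x ∈ Ω, IsUnit (Z x))
    (hYode : ∀ x ∈ Ω, deriv Y x = (∑ i, (x - t i)⁻¹ • A i) * Y x)
    (hZode : ∀ x ∈ Ω, deriv Z x = (∑ i, (x - t i)⁻¹ • B i) * Z x)
    -- identical monodromy: `Z·Y⁻¹` is the restriction of a single-valued
    -- holomorphic function on the complement of the singularities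
    (hmono : ∃ F : ℂ → Matrix (Fin 2) (Fin 2) ℂ,
        DifferentiableOn ℂ F {x : ℂ | ∀ i, x ≠ t i} ∧
        ∀ x ∈ Ω, F x = Z x * (Y x)⁻¹) :
    ∃ ξ : ℂ, ξ ≠ 0 ∧ ∃ Cc : Matrix (Fin 2) (Fin 2) ℂ,
      (Cc = Matrix.diagonal ![1, ξ] ∨ Cc = !![0, 1; ξ, 0]) ∧
      ∀ i, B i = Cc * A i * Cc⁻¹ := by
  have : CompleteSpace (Matrix (Fin 2) (Fin 2) ℂ) := FiniteDimensional.complete ℂ _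
  obtain ⟨F, hFd, hFZ⟩ := hmono
  have hUo : IsOpen {x : ℂ | ∀ i, x ≠ t i} := by
    simp only [Set.ofPred_forall]
    exact isOpen_iInter_of_finite fun i => isOpen_ne
  have hFat : ∀ x, (∀ i, x ≠ t i) → DifferentiableAt ℂ F x := fun x hx =>
    hFd.differentiableAt (hUo.mem_nhds hx)
  -- the ODE on `Ω`
  have hodeΩ : ∀ x ∈ Ω, deriv F x = ∑ i, (x - t i)⁻¹ • sylvOp (A i) (B i) (F x) := by
    intro x hx
    have hY := (hYd.differentiableAt (hΩo.mem_nhds hx)).hasDerivAt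
    have hFx := (hFat x (hΩS x hx)).hasDerivAt
    have hprod := matMul_hasDerivAt hFx hY
    have hFY : ∀ y ∈ Ω, F y * Y y = Z y := by
      intro y hy
      rw [hFZ y hy, Matrix.mul_assoc,
        Matrix.nonsing_inv_mul _ ((Matrix.isUnit_iff_isUnit_det _).1 (hYu y hy)), Matrix.mul_one]
    have hev : (fun z => F z * Y z) =ᶠ[nhds x] Z := by
      filter_upwards [hΩo.mem_nhds hx] with y hy using hFY y hy
    have h1 : deriv F x * Y x + F x * deriv Y x = deriv Z x :=
      hprod.deriv.symm.trans hev.deriv_eq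
    rw [hZode x hx, hYode x hx, ← hFY x hx, ← Matrix.mul_assoc, ← Matrix.mul_assoc,
      ← Matrix.add_mul] at h1
    have h2 := (hYu x hx).mul_left_injective h1
    rw [eq_sub_of_add_eq h2, Finset.sum_mul, Finset.mul_sum, ← Finset.sum_sub_distrib]
    refine Finset.sum_congr rfl fun i _ => ?_
    rw [sylvOp_apply, smul_sub, Matrix.smul_mul, Matrix.mul_smul]
  have hode : ∀ x, (∀ i, x ≠ t i) →
      deriv F x = ∑ i, (x - t i)⁻¹ • sylvOp (A i) (B i) (F x) := by
    obtain ⟨x₀, hx₀⟩ := hΩne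
    have hconn : IsPreconnected {x : ℂ | ∀ i, x ≠ t i} := by
      have h1 : (Set.range t).Countable := (Set.finite_range t).countable
      have h2 := (h1.isConnected_compl_of_one_lt_rank (E := ℂ)
        (by simp [Complex.rank_real_complex])).isPreconnected
      convert h2 using 1
      ext x
      simp [eq_comm]
    have ha1 : AnalyticOnNhd ℂ (deriv F) {x : ℂ | ∀ i, x ≠ t i} :=
      (hFd.deriv hUo).analyticOnNhd hUo
    have ha2 : AnalyticOnNhd ℂ (fun x => ∑ i, (x - t i)⁻¹ • sylvOp (A i) (B i) (F x))
        {x : ℂ | ∀ i, x ≠ t i} := by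
      refine DifferentiableOn.analyticOnNhd (fun x hx => ?_) hUo
      refine DifferentiableAt.differentiableWithinAt ?_
      refine DifferentiableAt.fun_sum fun i _ => ?_
      have h0 : x - t i ≠ 0 := sub_ne_zero.2 (hx i)
      refine DifferentiableAt.fun_smul ?_ ?_
      · fun_prop (disch := assumption)
      · exact (sylvOp (A i) (B i)).differentiableAt.comp x (hFat x hx)
    have := ha1.eqOn_of_preconnected_of_eventuallyEq ha2 hconn (hΩS x₀ hx₀) (by
      filter_upwards [hΩo.mem_nhds hx₀] with y hy using hodeΩ y hy)
    exact fun x hx => this hx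
  have hAc := charpoly_of_neg_diag _ _ _ hAinf
  have hBc : (∑ i, B i).charpoly = (X - C (-θpinf)) * (X - C (-θminf)) := by
    rcases hBinf with h | h
    · exact charpoly_of_neg_diag _ _ _ h
    · rw [charpoly_of_neg_diag _ _ _ h, mul_comm]
  obtain ⟨c, hc, hTc⟩ := fuchs_global t ht (fun i => sylvOp (A i) (B i)) F hFat hode
    (by
      intro i k hk v hv
      exact sylv _ _ v _ _ (hAev i) (hBev i) (hres i) k hk ((sylvOp_apply _ _ _).symm.trans hv))
    (by
      intro k hk v hv
      have hv2 : ∑ i, sylvOp (A i) (B i) v = (k : ℂ) • v := hv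
      simp only [sylvOp_apply, Finset.sum_sub_distrib, ← Finset.sum_mul, ← Finset.mul_sum] at hv2
      refine sylv _ _ v _ _ hAc hBc (fun k h => hresinf (-k) ?_) k hk hv2
      push_cast
      linear_combination -h)
  have hBcA : ∀ i, B i * c = c * A i := fun i => by
    exact sub_eq_zero.1 ((sylvOp_apply _ _ _).symm.trans (hTc i))
  have hcdet : c.det ≠ 0 := by
    obtain ⟨x₀, hx₀⟩ := hΩne
    have hY := (Matrix.isUnit_iff_isUnit_det _).1 (hYu x₀ hx₀)
    have hZ := (Matrix.isUnit_iff_isUnit_det _).1 (hZu x₀ hx₀)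
    rw [← hc x₀ (hΩS x₀ hx₀), hFZ x₀ hx₀, Matrix.det_mul]
    exact mul_ne_zero hZ.ne_zero (Matrix.isUnit_nonsing_inv_det _ hY).ne_zero
  have hsum : (-∑ i, B i) * c = c * (-∑ i, A i) := by
    rw [neg_mul, mul_neg, Finset.sum_mul, Finset.mul_sum]
    congr 1
    exact Finset.sum_congr rfl fun i _ => hBcA i
  rw [hAinf] at hsum
  have hfin : ∀ (a : ℂ) (Cc : Matrix (Fin 2) (Fin 2) ℂ), a ≠ 0 → c = a • Cc →
      ∀ i, B i = Cc * A i * Cc⁻¹ := by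
    intro a Cc ha hcC i
    have hu : IsUnit Cc.det := by
      rw [isUnit_iff_ne_zero]
      intro h0
      apply hcdet
      rw [hcC, Matrix.det_smul, h0, mul_zero]
    have h1 : B i * Cc = Cc * A i := by
      have := hBcA i
      rw [hcC, Matrix.mul_smul, Matrix.smul_mul] at this
      exact smul_right_injective _ ha this
    rw [← h1, Matrix.mul_assoc, Matrix.mul_nonsing_inv _ hu, Matrix.mul_one]
  have hne : θpinf - θminf ≠ 0 := sub_ne_zero.2 hinfne
  rw [Matrix.det_fin_two] at hcdet
  rcases hBinf with h | h
  · rw [h] at hsum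
    have h01 : c 0 1 = 0 := by
      have := congrFun (congrFun hsum 0) 1
      simp [Matrix.mul_diagonal, Matrix.diagonal_mul] at this
      exact (mul_eq_zero.1 (by linear_combination this : (θpinf - θminf) * c 0 1 = 0)).resolve_left
        hne
    have h10 : c 1 0 = 0 := by
      have := congrFun (congrFun hsum 1) 0
      simp [Matrix.mul_diagonal, Matrix.diagonal_mul] at this
      exact (mul_eq_zero.1 (by linear_combination -this : (θpinf - θminf) * c 1 0 = 0)).resolve_left
        hne
    rw [h01, zero_mul, sub_zero] at hcdet
    have h0 := left_ne_zero_of_mul hcdet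
    have h1 := right_ne_zero_of_mul hcdet
    refine ⟨c 1 1 / c 0 0, div_ne_zero h1 h0, _, Or.inl rfl, hfin (c 0 0) _ h0 ?_⟩
    ext i j
    fin_cases i <;> fin_cases j <;> simp [h01, h10]
    field_simp
  · rw [h] at hsum
    have h00 : c 0 0 = 0 := by
      have := congrFun (congrFun hsum 0) 0
      simp [Matrix.mul_diagonal, Matrix.diagonal_mul] at this
      exact (mul_eq_zero.1 (by linear_combination -this : (θpinf - θminf) * c 0 0 = 0)).resolve_left
        hne
    have h11 : c 1 1 = 0 := by
      have := congrFun (congrFun hsum 1) 1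
      simp [Matrix.mul_diagonal, Matrix.diagonal_mul] at this
      exact (mul_eq_zero.1 (by linear_combination this : (θpinf - θminf) * c 1 1 = 0)).resolve_left
        hne
    rw [h00, zero_mul, zero_sub, neg_ne_zero] at hcdet
    have h0 := left_ne_zero_of_mul hcdet
    have h1 := right_ne_zero_of_mul hcdet
    refine ⟨c 1 0 / c 0 1, div_ne_zero h1 h0, _, Or.inr rfl, hfin (c 0 1) _ h0 ?_⟩
    ext i j
    fin_cases i <;> fin_cases j <;> simp [h00, h11]
    field_simp
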